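/- arXiv:1601.07168 — 3 statements merged into one kernel-verified Lean document; each statement's English description precedes it below -/
import Mathlib

section
/- Let (X, A, d) be a C*-algebra-valued metric space and let F : X × X → X satisfy d(F(x,y), F(u,v)) ⪯ a* · d(x,u) · a + a* · d(y,v) · a for all x, y, u, v ∈ X, where a ∈ A with ‖a‖ < 1/√2. Given arbitrary x₀, y₀ ∈ X, define sequences by x_{n+1} = F(xₙ, yₙ) and y_{n+1} = F(yₙ, xₙ). Then (xₙ) and (yₙ) are Cauchy sequences in X (in fact ‖d(x_{n+p}, xₙ) + d(y_{n+p}, yₙ)‖ ≤ (‖√2·a‖^{2n} / (1 − ‖√2·a‖²)) · ‖d(x₀,x₁) + d(y₀,y₁)‖ for all n, p). -/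
/-!
On `X × X`, the coupled map `(x, y) ↦ (F x y, F y x)` contracts the sum distance
`d x u + d y v` by conjugation with `√2 • a`. Taking norms, each iteration shrinks distances by the
factor `‖√2 • a‖² < 1`, so the estimate of Banach's fixed point theorem applies to the orbit
`(xₙ, yₙ)`, and the norm of each coordinate distance is at most that of the sum.
-/

open Filter Topology

/-- A hemimetric (a metric without symmetry and without separation of points) with values in `M`;
for a C*-algebra-valued metric, `M` is the algebra with its positivity order. -/
structure IsHemimetric {X M : Type*} [Add M] [Zero M] [LE M] (d : X → X → M) : Prop where
  nonneg : ∀ x y, 0 ≤ d x y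
  self : ∀ x, d x x = 0
  triangle : ∀ x y z, d x y ≤ d x z + d z y

/-- The sum (`ℓ¹`) distance on a product. -/
def sumDist {X Y M : Type*} [Add M] (d : X → X → M) (e : Y → Y → M) (p q : X × Y) : M :=
  d p.1 q.1 + e p.2 q.2

theorem isHemimetric_sumDist {X Y M : Type*} [AddCommMonoid M] [PartialOrder M]
    [IsOrderedAddMonoid M] {d : X → X → M} {e : Y → Y → M}
    (hd : IsHemimetric d) (he : IsHemimetric e) : IsHemimetric (sumDist d e) where
  nonneg _ _ := add_nonneg (hd.nonneg _ _) (he.nonneg _ _)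
  self _ := by simp only [sumDist, hd.self, he.self, add_zero]
  triangle _ _ r :=
    (add_le_add (hd.triangle _ _ r.1) (he.triangle _ _ r.2)).trans_eq (add_add_add_comm _ _ _ _)

/-- The map `T` is Lipschitz for the algebra-valued distance `d`, with the Lipschitz constant
replaced by conjugation with `b`. For `‖b‖ < 1` this is a C*-algebra-valued contraction. -/
def IsConjLipschitz {X A : Type*} [Mul A] [Star A] [LE A] (d : X → X → A) (b : A)
    (T : X → X) : Prop :=
  ∀ p q, d (T p) (T q) ≤ star b * d p q * b

/-- The self-map of `X × X` whose orbits are the coupled iterations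
`x_{n+1} = F xₙ yₙ`, `y_{n+1} = F yₙ xₙ`. -/
def coupledMap {X : Type*} (F : X → X → X) (p : X × X) : X × X :=
  (F p.1 p.2, F p.2 p.1)

theorem coupledMap_iterate_eq {X : Type*} {F : X → X → X} {x y : ℕ → X}
    (hx : ∀ n, x (n + 1) = F (x n) (y n)) (hy : ∀ n, y (n + 1) = F (y n) (x n)) (n : ℕ) :
    (coupledMap F)^[n] (x 0, y 0) = (x n, y n) := by
  induction n with
  | zero => rfl
  | succ n ih => rw [Function.iterate_succ_apply', ih, coupledMap, hx, hy]

theorem isConjLipschitz_coupledMap {X A : Type*} [NonUnitalNonAssocSemiring A] [PartialOrder A]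
    [IsOrderedAddMonoid A] [Star A] [Module ℝ A] [StarModule ℝ A] [IsScalarTower ℝ A A]
    [SMulCommClass ℝ A A] {d : X → X → A} {F : X → X → X} {a : A}
    (hF : ∀ x y u v, d (F x y) (F u v) ≤ star a * d x u * a + star a * d y v * a) :
    IsConjLipschitz (sumDist d d) (√2 • a) (coupledMap F) := by
  intro p q
  have conj_sqrt_two_smul (u : A) :
      star (√2 • a) * u * (√2 • a) = star a * u * a + star a * u * a := by
    rw [star_smul, star_trivial, smul_mul_assoc, smul_mul_assoc, mul_smul_comm, smul_smul,
      Real.mul_self_sqrt zero_le_two, two_smul]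
  calc sumDist d d (coupledMap F p) (coupledMap F q)
      ≤ (star a * d p.1 q.1 * a + star a * d p.2 q.2 * a) +
          (star a * d p.2 q.2 * a + star a * d p.1 q.1 * a) :=
        add_le_add (hF _ _ _ _) (hF _ _ _ _)
    _ = star (√2 • a) * sumDist d d p q * (√2 • a) := by
        rw [conj_sqrt_two_smul, sumDist, mul_add, add_mul]
        abel

theorem norm_star_mul_mul_le {A : Type*} [NonUnitalSeminormedRing A] [StarAddMonoid A]
    [NormedStarGroup A] (b u : A) : ‖star b * u * b‖ ≤ ‖b‖ ^ 2 * ‖u‖ :=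
  calc ‖star b * u * b‖ ≤ ‖star b‖ * ‖u‖ * ‖b‖ := norm_mul₃_le
    _ = ‖b‖ ^ 2 * ‖u‖ := by rw [norm_star]; ring

theorem norm_smul_lt_one_iff {E : Type*} [SeminormedAddCommGroup E] [NormedSpace ℝ E] {r : ℝ}
    (hr : 0 < r) {a : E} : ‖r • a‖ < 1 ↔ ‖a‖ < 1 / r := by
  rw [norm_smul, Real.norm_of_nonneg hr.le, lt_div_iff₀' hr]

namespace IsConjLipschitz

variable {X A : Type*} [NonUnitalCStarAlgebra A] [PartialOrder A] [StarOrderedRing A]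
  {d : X → X → A} {b : A} {T : X → X}

theorem norm_map_le (hT : IsConjLipschitz d b T) (d_nonneg : ∀ p q, 0 ≤ d p q) (p q : X) :
    ‖d (T p) (T q)‖ ≤ ‖b‖ ^ 2 * ‖d p q‖ :=
  (CStarAlgebra.norm_le_norm_of_nonneg_of_le (d_nonneg _ _) (hT p q)).trans
    (norm_star_mul_mul_le b _)

theorem norm_iterate_le (hT : IsConjLipschitz d b T) (d_nonneg : ∀ p q, 0 ≤ d p q) (n : ℕ)
    (p q : X) : ‖d (T^[n] p) (T^[n] q)‖ ≤ ‖b‖ ^ (2 * n) * ‖d p q‖ := by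
  induction n with
  | zero => simp
  | succ n ih =>
    rw [Function.iterate_succ_apply', Function.iterate_succ_apply']
    calc ‖d (T (T^[n] p)) (T (T^[n] q))‖
        ≤ ‖b‖ ^ 2 * ‖d (T^[n] p) (T^[n] q)‖ := hT.norm_map_le d_nonneg _ _
      _ ≤ ‖b‖ ^ 2 * (‖b‖ ^ (2 * n) * ‖d p q‖) := by gcongr
      _ = ‖b‖ ^ (2 * (n + 1)) * ‖d p q‖ := by ring

theorem tendsto_norm_iterate_add (hT : IsConjLipschitz d b T) (d_nonneg : ∀ p q, 0 ≤ d p q)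
    (hb : ‖b‖ < 1) (x : X) (p : ℕ) :
    Tendsto (fun n => ‖d (T^[n + p] x) (T^[n] x)‖) atTop (𝓝 0) := by
  have pow_tendsto : Tendsto (fun n : ℕ => ‖b‖ ^ (2 * n)) atTop (𝓝 0) := by
    simp only [pow_mul]
    exact tendsto_pow_atTop_nhds_zero_of_lt_one (sq_nonneg _)
      (pow_lt_one₀ (norm_nonneg b) hb two_ne_zero)
  have bound_tendsto := pow_tendsto.mul_const ‖d (T^[p] x) x‖
  rw [zero_mul] at bound_tendsto
  refine squeeze_zero (fun _ => norm_nonneg _) (fun n => ?_) bound_tendsto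
  rw [Function.iterate_add_apply]
  exact hT.norm_iterate_le d_nonneg n _ _

theorem norm_iterate_self_le (hT : IsConjLipschitz d b T) (hd : IsHemimetric d) (hb : ‖b‖ < 1)
    (x : X) (p : ℕ) : ‖d (T^[p] x) x‖ ≤ ‖d (T x) x‖ / (1 - ‖b‖ ^ 2) := by
  have one_sub_pos : 0 < 1 - ‖b‖ ^ 2 := sub_pos.2 (pow_lt_one₀ (norm_nonneg b) hb two_ne_zero)
  induction p with
  | zero =>
    rw [Function.iterate_zero_apply, hd.self, norm_zero]
    positivity
  | succ p ih =>
    rw [Function.iterate_succ_apply']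
    calc ‖d (T (T^[p] x)) x‖
        ≤ ‖d (T (T^[p] x)) (T x) + d (T x) x‖ :=
          CStarAlgebra.norm_le_norm_of_nonneg_of_le (hd.nonneg _ _) (hd.triangle _ _ _)
      _ ≤ ‖d (T (T^[p] x)) (T x)‖ + ‖d (T x) x‖ := norm_add_le _ _
      _ ≤ ‖b‖ ^ 2 * ‖d (T^[p] x) x‖ + ‖d (T x) x‖ := by
          gcongr
          exact hT.norm_map_le hd.nonneg _ _
      _ ≤ ‖b‖ ^ 2 * (‖d (T x) x‖ / (1 - ‖b‖ ^ 2)) + ‖d (T x) x‖ := by gcongr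
      _ = ‖d (T x) x‖ / (1 - ‖b‖ ^ 2) := by field_simp; ring

theorem norm_iterate_add_le (hT : IsConjLipschitz d b T) (hd : IsHemimetric d) (hb : ‖b‖ < 1)
    (x : X) (n p : ℕ) :
    ‖d (T^[n + p] x) (T^[n] x)‖ ≤ ‖b‖ ^ (2 * n) / (1 - ‖b‖ ^ 2) * ‖d (T x) x‖ :=
  calc ‖d (T^[n + p] x) (T^[n] x)‖ = ‖d (T^[n] (T^[p] x)) (T^[n] x)‖ := by
        rw [Function.iterate_add_apply]
    _ ≤ ‖b‖ ^ (2 * n) * ‖d (T^[p] x) x‖ := hT.norm_iterate_le hd.nonneg n _ _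
    _ ≤ ‖b‖ ^ (2 * n) * (‖d (T x) x‖ / (1 - ‖b‖ ^ 2)) := by
        gcongr
        exact hT.norm_iterate_self_le hd hb x p
    _ = ‖b‖ ^ (2 * n) / (1 - ‖b‖ ^ 2) * ‖d (T x) x‖ := by ring

end IsConjLipschitz

theorem iteration_sequences_cauchy_general {X A : Type*} [NonUnitalCStarAlgebra A]
    [PartialOrder A] [StarOrderedRing A] {d : X → X → A} (hd : IsHemimetric d)
    {F : X → X → X} {a : A} (ha : ‖a‖ < 1 / √2)
    (hF : ∀ x y u v, d (F x y) (F u v) ≤ star a * d x u * a + star a * d y v * a)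
    {x y : ℕ → X} (hx : ∀ n, x (n + 1) = F (x n) (y n)) (hy : ∀ n, y (n + 1) = F (y n) (x n)) :
    (∀ p, Tendsto (fun n => ‖d (x (n + p)) (x n)‖) atTop (𝓝 0)) ∧
    (∀ p, Tendsto (fun n => ‖d (y (n + p)) (y n)‖) atTop (𝓝 0)) ∧
    (∀ n p, ‖d (x (n + p)) (x n) + d (y (n + p)) (y n)‖ ≤
      ‖√2 • a‖ ^ (2 * n) / (1 - ‖√2 • a‖ ^ 2) * ‖d (x 1) (x 0) + d (y 1) (y 0)‖) := by
  have hT := isConjLipschitz_coupledMap hF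
  have hD := isHemimetric_sumDist hd hd
  have hb : ‖√2 • a‖ < 1 := (norm_smul_lt_one_iff (Real.sqrt_pos.2 zero_lt_two)).2 ha
  have orbit := coupledMap_iterate_eq hx hy
  have sum_tendsto (p : ℕ) :
      Tendsto (fun n => ‖d (x (n + p)) (x n) + d (y (n + p)) (y n)‖) atTop (𝓝 0) := by
    simpa only [orbit, sumDist] using hT.tendsto_norm_iterate_add hD.nonneg hb (x 0, y 0) p
  refine ⟨fun p => ?_, fun p => ?_, fun n p => ?_⟩
  · exact squeeze_zero (fun _ => norm_nonneg _) (fun _ =>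
      CStarAlgebra.norm_le_norm_of_nonneg_of_le (hd.nonneg _ _)
        (le_add_of_nonneg_right (hd.nonneg _ _))) (sum_tendsto p)
  · exact squeeze_zero (fun _ => norm_nonneg _) (fun _ =>
      CStarAlgebra.norm_le_norm_of_nonneg_of_le (hd.nonneg _ _)
        (le_add_of_nonneg_left (hd.nonneg _ _))) (sum_tendsto p)
  · simpa only [orbit, sumDist, coupledMap, hx 0, hy 0] using
      hT.norm_iterate_add_le hD hb (x 0, y 0) n p

/-- In a C*-algebra-valued metric space, if
`d (F x y) (F u v) ⪯ a* ⬝ d x u ⬝ a + a* ⬝ d y v ⬝ a` with `‖a‖ < 1/√2`, then the Picard-type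
iteration sequences `x_{n+1} = F xₙ yₙ`, `y_{n+1} = F yₙ xₙ` are Cauchy; in fact
`‖d x_{n+p} xₙ + d y_{n+p} yₙ‖ ≤ ‖√2 • a‖^{2n} / (1 - ‖√2 • a‖²) * ‖d x₀ x₁ + d y₀ y₁‖`. -/
theorem iteration_sequences_cauchy
    {X : Type*} {A : Type*} [CStarAlgebra A]
    [PartialOrder A] [StarOrderedRing A]
    (d : X → X → A)
    (d_nonneg : ∀ x y, 0 ≤ d x y)
    (d_eq_zero : ∀ x y, d x y = 0 ↔ x = y)
    (d_symm : ∀ x y, d x y = d y x)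
    (d_triangle : ∀ x y z, d x y ≤ d x z + d z y)
    (F : X → X → X) (a : A)
    (ha : ‖a‖ < 1 / Real.sqrt 2)
    (hF : ∀ x y u v : X, d (F x y) (F u v) ≤ star a * d x u * a + star a * d y v * a)
    (x y : ℕ → X)
    (hx : ∀ n, x (n + 1) = F (x n) (y n))
    (hy : ∀ n, y (n + 1) = F (y n) (x n)) :
    (∀ p : ℕ, Filter.Tendsto (fun n => ‖d (x (n + p)) (x n)‖) Filter.atTop (nhds 0)) ∧
    (∀ p : ℕ, Filter.Tendsto (fun n => ‖d (y (n + p)) (y n)‖) Filter.atTop (nhds 0)) ∧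
    (∀ n p : ℕ, ‖d (x (n + p)) (x n) + d (y (n + p)) (y n)‖ ≤
      ‖Real.sqrt 2 • a‖ ^ (2 * n) / (1 - ‖Real.sqrt 2 • a‖ ^ 2) *
        ‖d (x 0) (x 1) + d (y 0) (y 1)‖) := by
  rw [d_symm (x 0), d_symm (y 0)]
  exact iteration_sequences_cauchy_general
    ⟨d_nonneg, fun x => (d_eq_zero x x).2 rfl, d_triangle⟩ ha hF hx hy
end

section
/- Let (X, A, d) be a C*-algebra-valued metric space and let F : X × X → X satisfy d(F(x,y), F(u,v)) ⪯ a* · d(x,u) · a + a* · d(y,v) · a for all x, y, u, v ∈ X, where a ∈ A with ‖a‖ < 1/√2. If (x, y) is a coupled fixed point of F, then x = y (hence x is a fixed point of F, i.e. F(x,x) = x). -/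
theorem sq_add_sq_lt_one_of_lt_one_div_sqrt_two {r : ℝ} (hr : 0 ≤ r)
    (hlt : r < 1 / Real.sqrt 2) : r ^ 2 + r ^ 2 < 1 := by
  rw [one_div, ← Real.sqrt_inv, Real.lt_sqrt hr] at hlt
  linarith

theorem norm_star_mul_mul_le_sq_mul_norm {R : Type*} [NonUnitalSeminormedRing R]
    [StarAddMonoid R] [NormedStarGroup R] (a p : R) : ‖star a * p * a‖ ≤ ‖a‖ ^ 2 * ‖p‖ :=
  calc
    ‖star a * p * a‖ ≤ ‖star a‖ * ‖p‖ * ‖a‖ := norm_mul₃_le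
    _ = ‖a‖ ^ 2 * ‖p‖ := by rw [norm_star]; ring

section NonUnitalCStarAlgebra

variable {A : Type*} [NonUnitalCStarAlgebra A] [PartialOrder A] [StarOrderedRing A]

theorem eq_zero_of_le_star_mul_mul_add_star_mul_mul {a b p : A}
    (hab : ‖a‖ ^ 2 + ‖b‖ ^ 2 < 1) (hp : 0 ≤ p)
    (hle : p ≤ star a * p * a + star b * p * b) : p = 0 := by
  have norm_le : ‖p‖ ≤ (‖a‖ ^ 2 + ‖b‖ ^ 2) * ‖p‖ :=
    calc
      ‖p‖ ≤ ‖star a * p * a + star b * p * b‖ :=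
        CStarAlgebra.norm_le_norm_of_nonneg_of_le hp hle
      _ ≤ ‖a‖ ^ 2 * ‖p‖ + ‖b‖ ^ 2 * ‖p‖ :=
        norm_add_le_of_le (norm_star_mul_mul_le_sq_mul_norm a p)
          (norm_star_mul_mul_le_sq_mul_norm b p)
      _ = (‖a‖ ^ 2 + ‖b‖ ^ 2) * ‖p‖ := by ring
  by_contra hne
  exact norm_le.not_gt (mul_lt_of_lt_one_left (norm_pos_iff.2 hne) hab)

theorem coupled_fixed_point_diag_general {X : Type*} {d : X → X → A}
    (d_nonneg : ∀ x y, 0 ≤ d x y) (eq_of_d_eq_zero : ∀ x y, d x y = 0 → x = y)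
    {F : X → X → X} {a b : A} (hab : ‖a‖ ^ 2 + ‖b‖ ^ 2 < 1)
    (hF : ∀ x y u v, d (F x y) (F u v) ≤ star a * d x u * a + star b * d y v * b)
    {x y : X} (hxy : F x y = x ∧ F y x = y) : x = y ∧ F x x = x := by
  obtain ⟨hx, hy⟩ := hxy
  have d_xy_le : d x y ≤ star a * d x y * a + star b * d y x * b := by
    simpa only [hx, hy] using hF x y y x
  have d_yx_le : d y x ≤ star a * d y x * a + star b * d x y * b := by
    simpa only [hx, hy] using hF y x x y
  -- The two bounds couple `d x y` with `d y x`, but their sum is a bound on `d x y + d y x` alone.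
  have sum_le : d x y + d y x ≤
      star a * (d x y + d y x) * a + star b * (d x y + d y x) * b :=
    (add_le_add d_xy_le d_yx_le).trans_eq (by noncomm_ring)
  have sum_eq_zero : d x y + d y x = 0 :=
    eq_zero_of_le_star_mul_mul_add_star_mul_mul hab
      (add_nonneg (d_nonneg x y) (d_nonneg y x)) sum_le
  obtain rfl : x = y := eq_of_d_eq_zero x y
    ((add_eq_zero_iff_of_nonneg (d_nonneg x y) (d_nonneg y x)).1 sum_eq_zero).1
  exact ⟨rfl, hx⟩

end NonUnitalCStarAlgebra

/-- In a C*-algebra-valued metric space, if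
`d (F x y) (F u v) ⪯ a* ⬝ d x u ⬝ a + a* ⬝ d y v ⬝ a` with `‖a‖ < 1/√2`, then any coupled
fixed point `(x, y)` of `F` satisfies `x = y`; in particular `x` is a fixed point of `F`. -/
theorem coupled_fixed_point_diag
    {X : Type*} {A : Type*} [CStarAlgebra A]
    [PartialOrder A] [StarOrderedRing A]
    (d : X → X → A)
    (d_nonneg : ∀ x y, 0 ≤ d x y)
    (d_eq_zero : ∀ x y, d x y = 0 ↔ x = y)
    (d_symm : ∀ x y, d x y = d y x)
    (d_triangle : ∀ x y z, d x y ≤ d x z + d z y)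
    (F : X → X → X) (a : A)
    (ha : ‖a‖ < 1 / Real.sqrt 2)
    (hF : ∀ x y u v : X, d (F x y) (F u v) ≤ star a * d x u * a + star a * d y v * a)
    (x y : X)
    (hxy : F x y = x ∧ F y x = y) :
    x = y ∧ F x x = x :=
  coupled_fixed_point_diag_general d_nonneg (fun x y => (d_eq_zero x y).1)
    (sq_add_sq_lt_one_of_lt_one_div_sqrt_two (norm_nonneg a) ha) hF hxy
end

section
/- Let (X, A, d) be a complete C*-algebra-valued metric space and let F : X × X → X satisfy d(F(x,y), F(u,v)) ⪯ a · d(F(x,y), u) + a · d(F(u,v), x) for all x, y, u, v ∈ X, where a is a positive element of A commuting with every element of A and ‖a‖ < 1/2. Then F has a unique fixed point in X, i.e. a unique x ∈ X with F(x,x) = x. -/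
/-!
The norm of a C⋆-algebra is submultiplicative, and monotone on positive elements. Hence `‖d x y‖` is
an ordinary metric, for which `x ↦ F x x` satisfies Chatterjea's condition
`dist (T x) (T y) ≤ k * (dist (T x) y + dist (T y) x)` with `k = ‖a‖ < 1 / 2`. Applied to
consecutive points of an orbit, where one of the two distances on the right vanishes, the condition
makes the steps shrink by the factor `k / (1 - k) < 1`, so the orbit converges; passing to the limit
in the condition shows that its limit is a fixed point.
-/

open Filter Function Topology
open scoped NNReal

/-- A Chatterjea map with constant `K`. As in `LipschitzWith`, no upper bound on `K` is included;
the fixed point theorem needs `K < 1 / 2`. -/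
def ChatterjeaWith {X : Type*} [PseudoMetricSpace X] (K : ℝ≥0) (T : X → X) : Prop :=
  ∀ x y, dist (T x) (T y) ≤ K * (dist (T x) y + dist (T y) x)

namespace ChatterjeaWith

section PseudoMetricSpace

variable {X : Type*} [PseudoMetricSpace X] {K : ℝ≥0} {T : X → X}

theorem dist_map_map_le (hT : ChatterjeaWith K T) (hK : K < 1) (x : X) :
    dist (T x) (T (T x)) ≤ K / (1 - K) * dist x (T x) := by
  have hK' : (0 : ℝ) < 1 - K := sub_pos.2 (mod_cast hK)
  have dist_le : dist (T x) (T (T x)) ≤ K * (dist x (T x) + dist (T x) (T (T x))) :=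
    calc dist (T x) (T (T x)) ≤ K * (dist (T x) (T x) + dist (T (T x)) x) := hT x (T x)
      _ = K * dist x (T (T x)) := by rw [dist_self, zero_add, dist_comm]
      _ ≤ K * (dist x (T x) + dist (T x) (T (T x))) := by gcongr; exact dist_triangle _ _ _
  rw [div_mul_eq_mul_div, le_div_iff₀ hK']
  linarith only [dist_le]

theorem dist_iterate_succ_le_geometric (hT : ChatterjeaWith K T) (hK : K < 1) (x : X) (n : ℕ) :
    dist (T^[n] x) (T^[n + 1] x) ≤ dist x (T x) * (K / (1 - K) : ℝ) ^ n := by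
  have ratio_nonneg : (0 : ℝ) ≤ K / (1 - K) :=
    div_nonneg K.coe_nonneg (sub_nonneg.2 (mod_cast hK.le))
  induction n with
  | zero => simp
  | succ n ih =>
    rw [iterate_succ_apply' T n] at ih
    calc dist (T^[n + 1] x) (T^[n + 2] x)
        ≤ K / (1 - K) * dist (T^[n] x) (T (T^[n] x)) := by
          simpa only [iterate_succ_apply'] using hT.dist_map_map_le hK (T^[n] x)
      _ ≤ K / (1 - K) * (dist x (T x) * (K / (1 - K) : ℝ) ^ n) :=
          mul_le_mul_of_nonneg_left ih ratio_nonneg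
      _ = dist x (T x) * (K / (1 - K) : ℝ) ^ (n + 1) := by ring

theorem cauchySeq_iterate (hT : ChatterjeaWith K T) (hK : K < 1 / 2) (x : X) :
    CauchySeq fun n ↦ T^[n] x := by
  have ratio_lt_one : (K / (1 - K) : ℝ) < 1 := by
    have hK' : (K : ℝ) < 1 / 2 := mod_cast hK
    rw [div_lt_one (by linarith only [hK'])]
    linarith only [hK']
  exact cauchySeq_of_le_geometric _ _ ratio_lt_one
    (hT.dist_iterate_succ_le_geometric (hK.trans one_half_lt_one) x)

end PseudoMetricSpace

section MetricSpace

variable {X : Type*} [MetricSpace X] {K : ℝ≥0} {T : X → X}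

theorem isFixedPt_of_tendsto {ι : Type*} {l : Filter ι} [l.NeBot] {u : ι → X} {x : X}
    (hT : ChatterjeaWith K T) (hK : K < 1) (hu : Tendsto u l (𝓝 x))
    (hTu : Tendsto (fun i ↦ T (u i)) l (𝓝 x)) : IsFixedPt T x := by
  have hK' : (K : ℝ) < 1 := mod_cast hK
  have dist_le : dist (T x) x ≤ K * (dist (T x) x + dist x x) :=
    le_of_tendsto_of_tendsto' (tendsto_const_nhds.dist hTu)
      (((tendsto_const_nhds.dist hu).add (hTu.dist tendsto_const_nhds)).const_mul _)
      fun i ↦ hT x (u i)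
  rw [dist_self, add_zero] at dist_le
  exact dist_le_zero.1 (by nlinarith only [hK', dist_le, dist_nonneg (x := T x) (y := x)])

theorem eq_of_isFixedPt {x y : X} (hT : ChatterjeaWith K T) (hK : K < 1 / 2)
    (hx : IsFixedPt T x) (hy : IsFixedPt T y) : x = y := by
  have hK' : (K : ℝ) < 1 / 2 := mod_cast hK
  have dist_le : dist x y ≤ K * (dist x y + dist y x) := by
    simpa only [hx.eq, hy.eq] using hT x y
  rw [dist_comm y x] at dist_le
  exact dist_le_zero.1 (by nlinarith only [hK', dist_le, dist_nonneg (x := x) (y := y)])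

theorem existsUnique_isFixedPt [CompleteSpace X] [Nonempty X] (hT : ChatterjeaWith K T)
    (hK : K < 1 / 2) : ∃! x, IsFixedPt T x := by
  obtain ⟨x₀⟩ := ‹Nonempty X›
  obtain ⟨x, hx⟩ := cauchySeq_tendsto_of_complete (hT.cauchySeq_iterate hK x₀)
  have hTx : Tendsto (fun n ↦ T (T^[n] x₀)) atTop (𝓝 x) := by
    simpa only [comp_def, iterate_succ_apply'] using hx.comp (tendsto_add_atTop_nat 1)
  have hfix : IsFixedPt T x := hT.isFixedPt_of_tendsto (hK.trans one_half_lt_one) hx hTx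
  exact ⟨x, hfix, fun y hy ↦ hT.eq_of_isFixedPt hK hy hfix⟩

end MetricSpace

end ChatterjeaWith

/-- A C⋆-algebra-valued metric on `X`, as a predicate on the distance function `d`. The
algebra may be non-unital. -/
structure IsCStarMetric {X A : Type*} [NonUnitalCStarAlgebra A] [PartialOrder A]
    (d : X → X → A) : Prop where
  nonneg : ∀ x y, 0 ≤ d x y
  eq_zero_iff : ∀ x y, d x y = 0 ↔ x = y
  symm : ∀ x y, d x y = d y x
  triangle : ∀ x y z, d x y ≤ d x z + d z y

namespace IsCStarMetric

variable {X A : Type*} [NonUnitalCStarAlgebra A] [PartialOrder A] [StarOrderedRing A]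
  {d : X → X → A}

/-- The real-valued metric `‖d x y‖` induced by a C⋆-algebra-valued metric `d`; its convergent and
Cauchy sequences are those of `d`. -/
abbrev toMetricSpace (hd : IsCStarMetric d) : MetricSpace X where
  dist x y := ‖d x y‖
  dist_self x := by rw [(hd.eq_zero_iff x x).2 rfl, norm_zero]
  dist_comm x y := by rw [hd.symm]
  dist_triangle x y z :=
    (CStarAlgebra.norm_le_norm_of_nonneg_of_le (hd.nonneg x z) (hd.triangle x z y)).trans
      (norm_add_le _ _)
  eq_of_dist_eq_zero h := (hd.eq_zero_iff _ _).1 (norm_eq_zero.1 h)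

theorem completeSpace (hd : IsCStarMetric d)
    (complete : ∀ u : ℕ → X,
      Tendsto (fun n : ℕ × ℕ ↦ ‖d (u n.1) (u n.2)‖) atTop (𝓝 0) →
      ∃ x, Tendsto (fun n ↦ ‖d (u n) x‖) atTop (𝓝 0)) :
    @CompleteSpace X hd.toMetricSpace.toUniformSpace := by
  let := hd.toMetricSpace
  refine Metric.complete_of_cauchySeq_tendsto fun u hu ↦ ?_
  obtain ⟨x, hx⟩ := complete u (cauchySeq_iff_tendsto_dist_atTop_0.1 hu)
  exact ⟨x, tendsto_iff_dist_tendsto_zero.2 hx⟩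

theorem chatterjeaWith (hd : IsCStarMetric d) {T : X → X} {a : A}
    (hT : ∀ x y, d (T x) (T y) ≤ a * d (T x) y + a * d (T y) x) :
    @ChatterjeaWith X hd.toMetricSpace.toPseudoMetricSpace ‖a‖₊ T := fun x y ↦
  calc ‖d (T x) (T y)‖ ≤ ‖a * d (T x) y + a * d (T y) x‖ :=
        CStarAlgebra.norm_le_norm_of_nonneg_of_le (hd.nonneg _ _) (hT x y)
    _ ≤ ‖a‖ * ‖d (T x) y‖ + ‖a‖ * ‖d (T y) x‖ :=
        norm_add_le_of_le (norm_mul_le _ _) (norm_mul_le _ _)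
    _ = ‖a‖ * (‖d (T x) y‖ + ‖d (T y) x‖) := (mul_add _ _ _).symm

end IsCStarMetric

/-- The two indices of a Cauchy sequence tend to infinity independently here, not at a fixed
distance `p`; for fixed `p`, sequences such as the harmonic sums would count as Cauchy. -/
theorem fixed_point_chatterjea_corollary_general {X A : Type*} [Nonempty X]
    [NonUnitalCStarAlgebra A] [PartialOrder A] [StarOrderedRing A] {d : X → X → A}
    (hd : IsCStarMetric d)
    (complete : ∀ u : ℕ → X,
      Tendsto (fun n : ℕ × ℕ ↦ ‖d (u n.1) (u n.2)‖) atTop (𝓝 0) →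
      ∃ x, Tendsto (fun n ↦ ‖d (u n) x‖) atTop (𝓝 0))
    {T : X → X} {a : A} (ha : ‖a‖ < 1 / 2)
    (hT : ∀ x y, d (T x) (T y) ≤ a * d (T x) y + a * d (T y) x) :
    ∃! x, IsFixedPt T x := by
  let := hd.toMetricSpace
  have := hd.completeSpace complete
  exact (hd.chatterjeaWith hT).existsUnique_isFixedPt (mod_cast ha)

/-- **Corollary 2.7 (Statement 10).** Let `(X, A, d)` be a complete C*-algebra-valued metric
space and `F : X × X → X` satisfy
`d (F x y) (F u v) ⪯ a ⬝ d (F x y) u + a ⬝ d (F u v) x` where `a` is a positive central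
element with `‖a‖ < 1/2`.  Then `F` has a unique fixed point in `X`. -/
theorem fixed_point_chatterjea_corollary
    {X : Type*} [Nonempty X] {A : Type*} [CStarAlgebra A]
    [PartialOrder A] [StarOrderedRing A]
    (d : X → X → A)
    (d_nonneg : ∀ x y, 0 ≤ d x y)
    (d_eq_zero : ∀ x y, d x y = 0 ↔ x = y)
    (d_symm : ∀ x y, d x y = d y x)
    (d_triangle : ∀ x y z, d x y ≤ d x z + d z y)
    (complete : ∀ u : ℕ → X,
      (∀ p : ℕ, Filter.Tendsto (fun n => ‖d (u (n + p)) (u n)‖) Filter.atTop (nhds 0)) →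
      ∃ x : X, Filter.Tendsto (fun n => ‖d (u n) x‖) Filter.atTop (nhds 0))
    (F : X → X → X) (a : A)
    (ha_pos : 0 ≤ a) (ha_comm : ∀ c : A, a * c = c * a)
    (ha : ‖a‖ < 1 / 2)
    (hF : ∀ x y u v : X, d (F x y) (F u v) ≤ a * d (F x y) u + a * d (F u v) x) :
    ∃! x : X, F x x = x :=
  fixed_point_chatterjea_corollary_general ⟨d_nonneg, d_eq_zero, d_symm, d_triangle⟩
    (fun u hu ↦ complete u fun p ↦ hu.comp <|
      ((tendsto_add_atTop_nat p).prod_atTop tendsto_id).comp tendsto_atTop_diagonal)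
    ha fun x y ↦ hF x x y y
end
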